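/- (Theorem 1, converse direction.) Consider an exchange economy with N consumers with utility functions u_i and total endowment w ∈ ℝ^K, w_k > 0 for all k. Let α ∈ ℝ^N with α_i > 0 for all i, let x be a feasible allocation (each x_i ≥ 0, Σ_i x_i ≤ w), and let p ≥ 0 be such that for each i the supremum defining v̄_i(p/α_i) is attained. If Y_α(x,p,w) = 0, then (x,p) is a Walrasian equilibrium with incomes m_i := ⟨p,x_i⟩: each x_i maximizes u_i over the budget set { z ≥ 0 : ⟨p,z⟩ ≤ ⟨p,x_i⟩ }; moreover the incomes add up to total wealth, Σ_i ⟨p,x_i⟩ = ⟨p,w⟩. -/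

import Mathlib

noncomputable section

/-- Inner product on `ℝ^K`. -/
def dot {K : ℕ} (p x : Fin K → ℝ) : ℝ := ∑ k, p k * x k

/-- A utility function: continuous, strictly increasing and strictly concave
on the nonnegative orthant. -/
structure IsUtility {K : ℕ} (u : (Fin K → ℝ) → ℝ) : Prop where
  continuousOn : ContinuousOn u {x : Fin K → ℝ | ∀ k, 0 ≤ x k}
  strictMono : ∀ x y : Fin K → ℝ, (∀ k, 0 ≤ x k) → (∀ k, 0 ≤ y k) →
    (∀ k, x k ≤ y k) → x ≠ y → u x < u y
  strictConcaveOn : StrictConcaveOn ℝ {x : Fin K → ℝ | ∀ k, 0 ≤ x k} u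

/-- The Fenchel dual `v̄(q) = sup { u(x) − ⟨q,x⟩ : x ≥ 0 }`. -/
def fenchelDual {K : ℕ} (u : (Fin K → ℝ) → ℝ) (q : Fin K → ℝ) : ℝ :=
  sSup ((fun x => u x - dot q x) '' {x : Fin K → ℝ | ∀ k, 0 ≤ x k})

/-- The economy's potential
`Y_α(x,p,w) = Σ_i α_i·u_i(x_i) − ⟨p,w⟩ − Σ_i α_i·v̄_i(p/α_i)`. -/
def potential {N K : ℕ} (u : Fin N → (Fin K → ℝ) → ℝ) (α : Fin N → ℝ)
    (x : Fin N → Fin K → ℝ) (p w : Fin K → ℝ) : ℝ :=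
  ∑ i, α i * u i (x i) - dot p w -
    ∑ i, α i * fenchelDual (u i) (fun k => p k / α i)

/-!
At a feasible allocation and nonnegative prices, `-Y_α(x,p,w)` is a sum of nonnegative terms: the
value `⟨p, w - ∑ x_i⟩` of the unconsumed endowment and, for each consumer, `α_i` times the gap in
the Fenchel–Young inequality `u_i(x_i) - ⟨p/α_i, x_i⟩ ≤ v̄_i(p/α_i)`. At a root of `Y_α` every term
vanishes. A vanishing gap says that `x_i` maximizes `u_i - ⟨p/α_i, ·⟩`, hence maximizes `u_i` among
the bundles that cost no more than `x_i`.
-/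

section Dot

variable {K : ℕ} {p : Fin K → ℝ}

lemma dot_eq_dotProduct (p x : Fin K → ℝ) : dot p x = p ⬝ᵥ x := rfl

lemma dot_div_left (p x : Fin K → ℝ) (a : ℝ) : dot (fun k => p k / a) x = dot p x / a := by
  simp only [dot, div_mul_eq_mul_div, Finset.sum_div]

lemma sum_dot_le_dot_of_sum_le {ι : Type*} {s : Finset ι} {x : ι → Fin K → ℝ} {w : Fin K → ℝ}
    (hp : 0 ≤ p) (hxw : ∑ i ∈ s, x i ≤ w) : ∑ i ∈ s, dot p (x i) ≤ dot p w := by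
  simp only [dot_eq_dotProduct, ← dotProduct_sum]
  exact dotProduct_le_dotProduct_of_nonneg_left hxw hp

end Dot

section FenchelGap

variable {K : ℕ} {u : (Fin K → ℝ) → ℝ} {q x z : Fin K → ℝ}

/-- The gap in the Fenchel–Young inequality `u(x) - ⟨q,x⟩ ≤ v̄(q)`: what a consumer buying `x` at
prices `q` loses compared with the best net utility `v̄(q)`. It is meaningful only where the
supremum defining `v̄(q)` is finite, since `fenchelDual` is `0` otherwise. -/
def fenchelGap (u : (Fin K → ℝ) → ℝ) (q x : Fin K → ℝ) : ℝ :=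
  fenchelDual u q - (u x - dot q x)

lemma fenchelGap_nonneg
    (hbdd : BddAbove ((fun y => u y - dot q y) '' {y : Fin K → ℝ | ∀ k, 0 ≤ y k}))
    (hx : ∀ k, 0 ≤ x k) : 0 ≤ fenchelGap u q x :=
  sub_nonneg.2 (le_csSup hbdd ⟨x, hx, rfl⟩)

lemma le_of_fenchelGap_eq_zero
    (hbdd : BddAbove ((fun y => u y - dot q y) '' {y : Fin K → ℝ | ∀ k, 0 ≤ y k}))
    (hgap : fenchelGap u q x = 0) (hz : ∀ k, 0 ≤ z k) (hcost : dot q z ≤ dot q x) :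
    u z ≤ u x := by
  have hnet : u z - dot q z ≤ u x - dot q x :=
    calc u z - dot q z ≤ fenchelDual u q := sub_nonneg.1 (fenchelGap_nonneg hbdd hz)
      _ = u x - dot q x := sub_eq_zero.1 hgap
  linarith

end FenchelGap

section Potential

variable {N K : ℕ} {u : Fin N → (Fin K → ℝ) → ℝ} {α : Fin N → ℝ} {x : Fin N → Fin K → ℝ}
  {p w : Fin K → ℝ}

lemma neg_potential_eq_sum_fenchelGap_add (u : Fin N → (Fin K → ℝ) → ℝ) (hα : ∀ i, α i ≠ 0)
    (x : Fin N → Fin K → ℝ) (p w : Fin K → ℝ) :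
    -potential u α x p w =
      ∑ i, α i * fenchelGap (u i) (fun k => p k / α i) (x i) +
        (dot p w - ∑ i, dot p (x i)) := by
  have hgap (i : Fin N) : α i * fenchelGap (u i) (fun k => p k / α i) (x i) =
      α i * fenchelDual (u i) (fun k => p k / α i) - α i * u i (x i) + dot p (x i) := by
    rw [fenchelGap, dot_div_left, mul_sub, mul_sub, mul_div_cancel₀ _ (hα i)]
    ring
  simp only [potential, hgap, Finset.sum_add_distrib, Finset.sum_sub_distrib]
  ring

lemma fenchelGap_eq_zero_and_sum_dot_eq_of_potential_eq_zero (hα : ∀ i, 0 < α i)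
    (hgap : ∀ i, 0 ≤ fenchelGap (u i) (fun k => p k / α i) (x i))
    (hvalue : ∑ i, dot p (x i) ≤ dot p w) (hY : potential u α x p w = 0) :
    (∀ i, fenchelGap (u i) (fun k => p k / α i) (x i) = 0) ∧
      ∑ i, dot p (x i) = dot p w := by
  have hterm (i : Fin N) : 0 ≤ α i * fenchelGap (u i) (fun k => p k / α i) (x i) :=
    mul_nonneg (hα i).le (hgap i)
  have hdecomp := neg_potential_eq_sum_fenchelGap_add u (fun i => (hα i).ne') x p w
  rw [hY, neg_zero, eq_comm, add_eq_zero_iff_of_nonneg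
    (Finset.sum_nonneg fun i _ => hterm i) (sub_nonneg.2 hvalue)] at hdecomp
  obtain ⟨hsum, hslack⟩ := hdecomp
  rw [Finset.sum_eq_zero_iff_of_nonneg fun i _ => hterm i] at hsum
  exact ⟨fun i => (mul_eq_zero_iff_left (hα i).ne').1 (hsum i (Finset.mem_univ i)),
    (sub_eq_zero.1 hslack).symm⟩

theorem root_of_potential_is_walrasian_general (hα : ∀ i, 0 < α i)
    (hx : ∀ i k, 0 ≤ x i k) (hfeas : ∀ k, ∑ i, x i k ≤ w k) (hp : ∀ k, 0 ≤ p k)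
    (hbdd : ∀ i, BddAbove
      ((fun y => u i y - dot (fun k => p k / α i) y) '' {y : Fin K → ℝ | ∀ k, 0 ≤ y k}))
    (hY : potential u α x p w = 0) :
    (∀ i, ∀ z : Fin K → ℝ, (∀ k, 0 ≤ z k) → dot p z ≤ dot p (x i) →
      u i z ≤ u i (x i)) ∧
    ∑ i, dot p (x i) = dot p w := by
  have hvalue : ∑ i, dot p (x i) ≤ dot p w :=
    sum_dot_le_dot_of_sum_le hp fun k => by simpa only [Finset.sum_apply] using hfeas k
  obtain ⟨hgap, hclear⟩ := fenchelGap_eq_zero_and_sum_dot_eq_of_potential_eq_zero hα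
    (fun i => fenchelGap_nonneg (hbdd i) (hx i)) hvalue hY
  refine ⟨fun i z hz hcost => le_of_fenchelGap_eq_zero (hbdd i) (hgap i) hz ?_, hclear⟩
  simpa only [dot_div_left] using div_le_div_of_nonneg_right hcost (hα i).le

end Potential

/-- Theorem 1, converse direction: a root of the potential is a Walrasian
equilibrium with incomes `m_i = ⟨p,x_i⟩`, and incomes add up to total wealth. -/
theorem root_of_potential_is_walrasian {N K : ℕ}
    (u : Fin N → (Fin K → ℝ) → ℝ) (hu : ∀ i, IsUtility (u i))
    (w : Fin K → ℝ) (hw : ∀ k, 0 < w k)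
    (α : Fin N → ℝ) (hα : ∀ i, 0 < α i)
    (x : Fin N → Fin K → ℝ) (hx : ∀ i k, 0 ≤ x i k)
    (hfeas : ∀ k, ∑ i, x i k ≤ w k)
    (p : Fin K → ℝ) (hp : ∀ k, 0 ≤ p k)
    (hattain : ∀ i, ∃ z : Fin K → ℝ, (∀ k, 0 ≤ z k) ∧
      ∀ y : Fin K → ℝ, (∀ k, 0 ≤ y k) →
        u i y - dot (fun k => p k / α i) y ≤ u i z - dot (fun k => p k / α i) z)
    (hY : potential u α x p w = 0) :
    (∀ i, ∀ z : Fin K → ℝ, (∀ k, 0 ≤ z k) → dot p z ≤ dot p (x i) →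
      u i z ≤ u i (x i)) ∧
    ∑ i, dot p (x i) = dot p w := by
  refine root_of_potential_is_walrasian_general hα hx hfeas hp (fun i => ?_) hY
  obtain ⟨z, -, hmax⟩ := hattain i
  exact ⟨_, Set.forall_mem_image.2 hmax⟩
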